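/- arXiv:2008.02524 — 2 statements merged into one kernel-verified Lean document; each statement's English description precedes it below -/
import Mathlib

section
/- Let 1 ≤ q < 2 and define F(t) = (1 - t)^{2-q} · Σ_{n=0}^∞ (Γ(n + 1 - q/2) · Γ(n + 2 - q/2)) / (Γ(1 - q/2) · Γ(2 - q/2) · (n!)²) · t^n for t ∈ [0,1). Then F is a decreasing (monotone nonincreasing) function of t on [0,1). -/
open MeasureTheory Complex Filter

noncomputable section

lemma summable_deriv_aux {r : ℝ} (h0 : 0 ≤ r) (h1 : r < 1) :
    Summable (fun n : ℕ => (n : ℝ) * r ^ (n - 1)) := by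
  rw [← summable_nat_add_iff 1]
  have hn : ‖r‖ < 1 := by rw [Real.norm_eq_abs, abs_of_nonneg h0]; exact h1
  have hA := summable_pow_mul_geometric_of_norm_lt_one 1 hn
  have hB := summable_geometric_of_lt_one h0 h1
  refine (hA.add hB).congr ?_
  intro n
  simp
  ring

lemma aux_bound (c : ℕ → ℝ) (hc0 : ∀ n, 0 ≤ c n) (hc1 : ∀ n, c n ≤ 1) (n : ℕ) : |c n| ≤ 1 := by
  rw [abs_of_nonneg (hc0 n)]; exact hc1 n

lemma summable_aux (c : ℕ → ℝ) (hc0 : ∀ n, 0 ≤ c n) (hc1 : ∀ n, c n ≤ 1) {t : ℝ}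
    (ht : |t| < 1) : Summable (fun n : ℕ => c n * t ^ n) := by
  refine Summable.of_norm_bounded (summable_geometric_of_lt_one (abs_nonneg t) ht) ?_
  intro n
  rw [Real.norm_eq_abs, abs_mul, abs_pow]
  exact mul_le_of_le_one_left (by positivity) (aux_bound c hc0 hc1 n)

lemma summable_aux' (c : ℕ → ℝ) (hc0 : ∀ n, 0 ≤ c n) (hc1 : ∀ n, c n ≤ 1) {t : ℝ}
    (ht : |t| < 1) : Summable (fun n : ℕ => c n * (n * t ^ (n - 1))) := by
  refine Summable.of_norm_bounded (summable_deriv_aux (abs_nonneg t) ht) ?_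
  intro n
  rw [Real.norm_eq_abs, abs_mul, abs_mul, abs_pow, Nat.abs_cast]
  exact mul_le_of_le_one_left (by positivity) (aux_bound c hc0 hc1 n)

lemma hasDerivAt_aux (c : ℕ → ℝ) (hc0 : ∀ n, 0 ≤ c n) (hc1 : ∀ n, c n ≤ 1) {t : ℝ}
    (ht : |t| < 1) :
    HasDerivAt (fun x : ℝ => ∑' n : ℕ, c n * x ^ n) (∑' n : ℕ, c n * (n * t ^ (n - 1))) t := by
  obtain ⟨r, hr, hr1⟩ := exists_between ht
  have hr0 : 0 ≤ r := (abs_nonneg t).trans hr.le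
  refine hasDerivAt_tsum_of_isPreconnected (summable_deriv_aux hr0 hr1)
    (t := Metric.ball (0 : ℝ) r) Metric.isOpen_ball (convex_ball _ _).isPreconnected
    (g := fun n x => c n * x ^ n) (g' := fun n x => c n * (n * x ^ (n - 1))) (y₀ := 0)
    ?_ ?_ ?_ ?_ ?_
  · intro n y _
    exact (hasDerivAt_pow n y).const_mul (c n)
  · intro n y hy
    have hy' : |y| < r := by simpa using hy
    rw [Real.norm_eq_abs, abs_mul, abs_mul, abs_pow, Nat.abs_cast]
    refine (mul_le_of_le_one_left (by positivity) (aux_bound c hc0 hc1 n)).trans ?_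
    gcongr
  · simpa using (abs_nonneg t).trans_lt hr
  · exact summable_aux c hc0 hc1 (by simp)
  · simpa using hr

lemma antitone_aux (c : ℕ → ℝ) (hc0 : ∀ n, 0 ≤ c n) (hc1 : ∀ n, c n ≤ 1) (s : ℝ)
    (hs : ∀ n : ℕ, ((n : ℝ) + 1) * c (n + 1) ≤ (n + s) * c n) :
    AntitoneOn (fun t : ℝ => (1 - t) ^ s * ∑' n : ℕ, c n * t ^ n) (Set.Ico (0 : ℝ) 1) := by
  have key : ∀ t : ℝ, 0 ≤ t → t < 1 →
      HasDerivAt (fun t : ℝ => (1 - t) ^ s * ∑' n : ℕ, c n * t ^ n)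
        ((-1 * s * (1 - t) ^ (s - 1)) * (∑' n : ℕ, c n * t ^ n) +
          (1 - t) ^ s * ∑' n : ℕ, c n * (n * t ^ (n - 1))) t := by
    intro t h0 h1
    have ht : |t| < 1 := by rwa [abs_of_nonneg h0]
    have h2 : HasDerivAt (fun x : ℝ => 1 - x) (-1) t := by
      simpa using (hasDerivAt_id t).const_sub 1
    exact (h2.rpow_const (Or.inl (by linarith))).mul (hasDerivAt_aux c hc0 hc1 ht)
  refine antitoneOn_of_hasDerivWithinAt_nonpos (convex_Ico 0 1)
    (f' := fun t => (-1 * s * (1 - t) ^ (s - 1)) * (∑' n : ℕ, c n * t ^ n) +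
          (1 - t) ^ s * ∑' n : ℕ, c n * (n * t ^ (n - 1))) ?_ ?_ ?_
  · intro t ht
    exact (key t ht.1 ht.2).continuousAt.continuousWithinAt
  · intro t ht
    rw [interior_Ico] at ht
    exact (key t ht.1.le ht.2).hasDerivWithinAt
  · intro t ht
    rw [interior_Ico] at ht
    have ht0 := ht.1.le
    have ht1 : |t| < 1 := by rw [abs_of_nonneg ht0]; exact ht.2
    have hS := summable_aux c hc0 hc1 ht1
    have hD := summable_aux' c hc0 hc1 ht1
    have hD1 := (summable_nat_add_iff 1).2 hD
    have e1 : ∑' n : ℕ, c n * (n * t ^ (n - 1)) =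
        ∑' n : ℕ, c (n + 1) * (((n + 1 : ℕ) : ℝ) * t ^ (n + 1 - 1)) := by
      rw [hD.tsum_eq_zero_add]; simp
    have hle : ∑' n : ℕ, c n * (n * t ^ (n - 1)) ≤
        t * (∑' n : ℕ, c n * (n * t ^ (n - 1))) + s * ∑' n : ℕ, c n * t ^ n := by
      conv_lhs => rw [e1]
      rw [← tsum_mul_left, ← tsum_mul_left, ← (hD.mul_left t).tsum_add (hS.mul_left s)]
      refine hD1.tsum_le_tsum ?_ ((hD.mul_left t).add (hS.mul_left s))
      intro n
      have h := mul_le_mul_of_nonneg_right (hs n) (pow_nonneg ht0 n)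
      have h3 : t * (c n * (n * t ^ (n - 1))) = n * c n * t ^ n := by
        cases n with
        | zero => simp
        | succ m => simp only [Nat.add_sub_cancel]; ring
      rw [h3]
      simp only [Nat.add_sub_cancel]
      push_cast
      linarith
    have hp : 0 < 1 - t := by linarith [ht.2]
    have e2 : (1 - t) ^ s = (1 - t) ^ (s - 1) * (1 - t) := by
      rw [← Real.rpow_add_one hp.ne']; simp
    have hq := Real.rpow_nonneg hp.le (s - 1)
    simp only [e2]
    nlinarith [mul_le_mul_of_nonneg_left hle hq]

/-- For 1 ≤ q < 2, the function
F(t) = (1-t)^{2-q} · ₂F₁[1-q/2, 2-q/2; 1; t]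
     = (1-t)^{2-q} · Σ_{n≥0} Γ(n+1-q/2)Γ(n+2-q/2)/(Γ(1-q/2)Γ(2-q/2)(n!)²) tⁿ
is nonincreasing on [0,1). -/
theorem F_antitone (q : ℝ) (hq1 : 1 ≤ q) (hq2 : q < 2) :
    AntitoneOn
      (fun t : ℝ => (1 - t) ^ (2 - q) *
        ∑' n : ℕ,
          (Real.Gamma ((n : ℝ) + 1 - q / 2) * Real.Gamma ((n : ℝ) + 2 - q / 2)) /
            (Real.Gamma (1 - q / 2) * Real.Gamma (2 - q / 2) * ((n.factorial : ℝ)) ^ 2) * t ^ n)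
      (Set.Ico (0 : ℝ) 1) := by
  have ha : 0 < 1 - q / 2 := by linarith
  have hb : 0 < 2 - q / 2 := by linarith
  have hG1 := Real.Gamma_pos_of_pos ha
  have hG2 := Real.Gamma_pos_of_pos hb
  have hrec : ∀ n : ℕ, (Real.Gamma (((n + 1 : ℕ) : ℝ) + 1 - q / 2) *
        Real.Gamma (((n + 1 : ℕ) : ℝ) + 2 - q / 2)) /
      (Real.Gamma (1 - q / 2) * Real.Gamma (2 - q / 2) * (((n + 1).factorial : ℝ)) ^ 2) =
      ((n + 1 - q / 2) * (n + 2 - q / 2) / ((n : ℝ) + 1) ^ 2) *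
      ((Real.Gamma ((n : ℝ) + 1 - q / 2) * Real.Gamma ((n : ℝ) + 2 - q / 2)) /
      (Real.Gamma (1 - q / 2) * Real.Gamma (2 - q / 2) * ((n.factorial : ℝ)) ^ 2)) := by
    intro n
    have hn : (0 : ℝ) ≤ n := Nat.cast_nonneg n
    have e1 : ((n + 1 : ℕ) : ℝ) + 1 - q / 2 = (n + 1 - q / 2) + 1 := by push_cast; ring
    have e2 : ((n + 1 : ℕ) : ℝ) + 2 - q / 2 = (n + 2 - q / 2) + 1 := by push_cast; ring
    rw [e1, e2, Real.Gamma_add_one (by linarith), Real.Gamma_add_one (by linarith),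
      Nat.factorial_succ]
    have hf : (n.factorial : ℝ) ≠ 0 := by exact_mod_cast n.factorial_ne_zero
    have hn1 : (n : ℝ) + 1 ≠ 0 := by positivity
    push_cast
    field_simp
  have hc0 : ∀ n : ℕ, 0 ≤ (Real.Gamma ((n : ℝ) + 1 - q / 2) * Real.Gamma ((n : ℝ) + 2 - q / 2)) /
      (Real.Gamma (1 - q / 2) * Real.Gamma (2 - q / 2) * ((n.factorial : ℝ)) ^ 2) := by
    intro n
    have hn : (0 : ℝ) ≤ n := Nat.cast_nonneg n
    have h1 := Real.Gamma_pos_of_pos (show 0 < (n : ℝ) + 1 - q / 2 by linarith)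
    have h2 := Real.Gamma_pos_of_pos (show 0 < (n : ℝ) + 2 - q / 2 by linarith)
    positivity
  refine antitone_aux (fun n : ℕ =>
    (Real.Gamma ((n : ℝ) + 1 - q / 2) * Real.Gamma ((n : ℝ) + 2 - q / 2)) /
      (Real.Gamma (1 - q / 2) * Real.Gamma (2 - q / 2) * ((n.factorial : ℝ)) ^ 2))
    hc0 ?_ (2 - q) ?_
  · intro n
    induction n with
    | zero =>
      have : Real.Gamma (1 - q / 2) * Real.Gamma (2 - q / 2) ≠ 0 := by positivity
      simp [div_self this]
    | succ n ih =>
      have hn : (0 : ℝ) ≤ n := Nat.cast_nonneg n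
      simp only [hrec]
      refine mul_le_one₀ ?_ (hc0 n) ih
      rw [div_le_one (by positivity)]
      nlinarith
  · intro n
    have hn : (0 : ℝ) ≤ n := Nat.cast_nonneg n
    simp only [hrec]
    rw [← mul_assoc]
    refine mul_le_mul_of_nonneg_right ?_ (hc0 n)
    rw [← mul_div_assoc, div_le_iff₀ (by positivity)]
    have : ((n : ℝ) + 1 - q / 2) * (n + 2 - q / 2) ≤ (n + (2 - q)) * (n + 1) := by nlinarith
    nlinarith [mul_le_mul_of_nonneg_left this (show (0 : ℝ) ≤ n + 1 by positivity)]
end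
end

section
/- Σ_{n=0}^∞ (Γ(n + 1/2)/(n! · Γ(1/2)))² · 1/(2n + 3) = (1 + 2α)/(2π), where α = Σ_{n=0}^∞ (-1)^n/(2n+1)² is the Catalan constant. -/
open MeasureTheory Complex Filter

noncomputable section

/-- The Catalan constant α = Σ_{n=0}^∞ (-1)^n/(2n+1)². -/
def catalanConst : ℝ := ∑' n : ℕ, (-1 : ℝ) ^ n / (2 * (n : ℝ) + 1) ^ 2

/-- The Wallis coefficients, `C(2n,n)/4^n`. -/
def wc (n : ℕ) : ℝ := ∏ i ∈ Finset.range n, (2 * (i : ℝ) + 1) / (2 * i + 2)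

lemma wc_succ (n : ℕ) : wc (n + 1) = wc n * ((2 * (n : ℝ) + 1) / (2 * n + 2)) :=
  Finset.prod_range_succ _ _

lemma wc_zero : wc 0 = 1 := by simp [wc]

lemma wc_pos (n : ℕ) : 0 < wc n := Finset.prod_pos fun i _ => by positivity

lemma wc_gamma (n : ℕ) :
    Real.Gamma ((n : ℝ) + 1 / 2) / ((n.factorial : ℝ) * Real.Gamma (1 / 2)) = wc n := by
  have hg : Real.Gamma (1 / 2) ≠ 0 := (Real.Gamma_pos_of_pos (by norm_num)).ne'
  induction n with
  | zero => simp only [Nat.cast_zero, zero_add, Nat.factorial_zero, Nat.cast_one, one_mul, wc_zero]; exact div_self hg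
  | succ n ih =>
    rw [wc_succ, ← ih, Nat.factorial_succ]
    have : ((n + 1 : ℕ) : ℝ) + 1 / 2 = ((n : ℝ) + 1 / 2) + 1 := by push_cast; ring
    rw [this, Real.Gamma_add_one (by positivity)]
    have := Nat.cast_ne_zero (R := ℝ).2 n.factorial_ne_zero
    push_cast
    field_simp

lemma wc_sq (n : ℕ) : wc n ^ 2 = 1 / (Real.Wallis.W n * (2 * n + 1)) := by
  induction n with
  | zero => simp [wc_zero, Real.Wallis.W]
  | succ n ih =>
    have := Real.Wallis.W_pos n
    rw [wc_succ, mul_pow, ih, Real.Wallis.W_succ]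
    push_cast
    field_simp
    ring

lemma wc_choose (n : ℕ) : Ring.choose (-1 / 2 : ℝ) n * (-1) ^ n = wc n := by
  have h : ∀ n : ℕ, (n.factorial : ℝ) * Ring.choose (-1 / 2 : ℝ) n = (descPochhammer ℤ n).smeval (-1 / 2 : ℝ) := by
    intro n
    rw [Ring.descPochhammer_eq_factorial_smul_choose, nsmul_eq_mul]
  have h2 : ∀ n : ℕ, (descPochhammer ℤ n).smeval (-1 / 2 : ℝ) * (-1) ^ n = n.factorial * wc n := by
    intro n
    induction n with
    | zero => simp [wc_zero]
    | succ n ih =>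
      rw [wc_succ, Nat.factorial_succ, descPochhammer_succ_right, Polynomial.smeval_mul]
      simp only [Polynomial.smeval_sub, Polynomial.smeval_X, Polynomial.smeval_natCast, pow_one, pow_zero, nsmul_eq_mul, mul_one]
      rw [pow_succ]
      trans ((descPochhammer ℤ n).smeval (-1 / 2 : ℝ) * (-1) ^ n) * (n + 1 / 2)
      · ring
      · rw [ih]; push_cast; field_simp
  have h3 := h2 n
  rw [← h n] at h3
  have := Nat.cast_ne_zero (R := ℝ).2 n.factorial_ne_zero
  apply mul_left_cancel₀ this
  rw [← h3]; ring

lemma hasSum_invsqrt (x : ℝ) (hx : |x| < 1) :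
    HasSum (fun n => wc n * x ^ n) (1 / √(1 - x)) := by
  have h := (Real.one_add_rpow_hasFPowerSeriesOnBall_zero (a := -1 / 2)).hasSum (y := -x) (by
    rw [← ENNReal.ofReal_one, Metric.eball_ofReal]; simpa using hx)
  have e : (1 + (0 + -x)) ^ (-1 / 2 : ℝ) = 1 / √(1 - x) := by
    rw [Real.sqrt_eq_rpow, zero_add, ← sub_eq_add_neg, show (-1 / 2 : ℝ) = -(1 / 2) by norm_num, Real.rpow_neg, one_div ((1 - x) ^ _)]
    have := (abs_lt.1 hx).2
    linarith
  rw [e] at h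
  refine h.congr_fun ?_ |> id
  intro n
  rw [← wc_choose]
  simp only [binomialSeries_apply, List.ofFn_const, List.prod_replicate, smul_eq_mul, neg_pow x]
  ring

lemma hasSum_arcsin (s : ℝ) (h0 : 0 ≤ s) (h1 : s < 1) :
    HasSum (fun n : ℕ => wc n * s ^ (2 * n + 1) / (2 * n + 1)) (Real.arcsin s) := by
  have hs2 : |s ^ 2| < 1 := by rw [abs_of_nonneg (by positivity)]; nlinarith
  have key := intervalIntegral.hasSum_integral_of_dominated_convergence (μ := volume) (a := 0) (b := s)
    (F := fun n t => wc n * (t ^ 2) ^ n) (f := fun t => 1 / √(1 - t ^ 2))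
    (fun n _ => wc n * (s ^ 2) ^ n)
    (fun n => by
      apply Continuous.aestronglyMeasurable
      fun_prop)
    (fun n => by
      filter_upwards with t ht
      rw [Set.uIoc_of_le h0] at ht
      have := wc_pos n
      rw [Real.norm_of_nonneg (by positivity)]
      have := ht.1.le
      have := ht.2
      gcongr)
    (by
      filter_upwards with t ht
      exact (hasSum_invsqrt _ hs2).summable)
    (by simp)
    (by
      filter_upwards with t ht
      rw [Set.uIoc_of_le h0] at ht
      apply hasSum_invsqrt
      rw [abs_of_nonneg (by positivity)]
      nlinarith [ht.1, ht.2])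
  have hint : ∫ t in (0:ℝ)..s, 1 / √(1 - t ^ 2) = Real.arcsin s := by
    rw [intervalIntegral.integral_eq_sub_of_hasDerivAt (f := Real.arcsin)]
    · simp
    · intro t ht
      rw [Set.uIcc_of_le h0] at ht
      exact Real.hasDerivAt_arcsin (by linarith [ht.1]) (by linarith [ht.2])
    · apply ContinuousOn.intervalIntegrable
      rw [Set.uIcc_of_le h0]
      apply ContinuousOn.div (by fun_prop) (by fun_prop)
      intro t ht
      apply (Real.sqrt_pos.2 _).ne'
      nlinarith [ht.1, ht.2]
  rw [hint] at key
  refine key.congr_fun ?_ |> id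
  intro n
  simp_rw [← pow_mul]
  simp
  ring

lemma integral_sin_half (n : ℕ) : ∫ x in (0:ℝ)..(Real.pi / 2), Real.sin x ^ (2 * n) = Real.pi / 2 * wc n := by
  have h := integral_sin_pow_even (n := n)
  have h1 : ∫ x in (Real.pi / 2)..Real.pi, Real.sin x ^ (2 * n) = ∫ x in (0:ℝ)..(Real.pi / 2), Real.sin x ^ (2 * n) := by
    have := intervalIntegral.integral_comp_sub_left (a := 0) (b := Real.pi / 2) (fun x => Real.sin x ^ (2 * n)) Real.pi
    simp only [Real.sin_pi_sub] at this
    rw [this]; congr 1 <;> ring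
  have hc : Continuous fun x : ℝ => Real.sin x ^ (2 * n) := by fun_prop
  rw [← intervalIntegral.integral_add_adjacent_intervals (hc.intervalIntegrable 0 (Real.pi / 2)) (hc.intervalIntegrable _ _), h1] at h
  change _ = Real.pi * wc n at h
  linarith

lemma wc_sq_le (n : ℕ) : wc n ^ 2 ≤ 2 / (2 * n + 1) := by
  rw [wc_sq]
  have h := Real.Wallis.le_W n
  have h2 : (1:ℝ) / 2 ≤ (2 * n + 1) / (2 * n + 2) := by
    rw [div_le_div_iff₀ (by norm_num) (by positivity)]
    have : (0:ℝ) ≤ n := by positivity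
    linarith
  have h3 : (1:ℝ) / 2 ≤ Real.Wallis.W n := by nlinarith [Real.pi_gt_three]
  rw [div_le_div_iff₀ (by nlinarith [(Nat.cast_nonneg n : (0:ℝ) ≤ n)]) (by positivity)]
  nlinarith [(Nat.cast_nonneg n : (0:ℝ) ≤ n)]

lemma summable_odd_sq : Summable fun n : ℕ => 1 / (2 * (n : ℝ) + 1) ^ 2 := by
  have h : Summable fun n : ℕ => 1 / ((n : ℝ)) ^ 2 := Real.summable_one_div_nat_pow.2 (by norm_num)
  have := h.comp_injective (i := fun n : ℕ => 2 * n + 1) (fun a b h => by simpa using h)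
  simpa [Function.comp_def] using this

lemma summable_S1 : Summable fun n : ℕ => wc n ^ 2 / (2 * (n : ℝ) + 1) := by
  refine Summable.of_nonneg_of_le (fun n => by positivity) (fun n => ?_) (summable_odd_sq.mul_left 2)
  calc _ ≤ (2 / (2 * (n : ℝ) + 1)) / (2 * n + 1) := by gcongr; exact wc_sq_le n
    _ = _ := by field_simp

lemma integral_series {b : ℝ} (hb : 0 ≤ b) (F : ℕ → ℝ → ℝ) (f : ℝ → ℝ) (hc : ∀ n, Continuous (F n))
    (hs : Summable fun n => ∫ x in (0:ℝ)..b, ‖F n x‖)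
    (hf : ∀ x ∈ Set.Ioo 0 b, HasSum (fun n => F n x) (f x)) :
    HasSum (fun n => ∫ x in (0:ℝ)..b, F n x) (∫ x in (0:ℝ)..b, f x) := by
  simp only [intervalIntegral.integral_of_le hb, integral_Ioc_eq_integral_Ioo] at hs ⊢
  have h := hasSum_integral_of_summable_integral_norm (μ := volume.restrict (Set.Ioo 0 b)) (F := F)
    (fun n => ((hc n).integrableOn_Icc (a := 0) (b := b)).mono_set Set.Ioo_subset_Icc_self) hs
  rw [setIntegral_congr_fun measurableSet_Ioo (fun x hx => (hf x hx).tsum_eq)] at h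
  exact h

lemma S1_eq : HasSum (fun n : ℕ => Real.pi / 2 * (wc n ^ 2 / (2 * (n : ℝ) + 1)))
    (∫ x in (0:ℝ)..(Real.pi / 2), (Real.sinc x)⁻¹) := by
  have hv : ∀ n : ℕ, ∫ x in (0:ℝ)..(Real.pi / 2), wc n / (2 * n + 1) * Real.sin x ^ (2 * n) =
      Real.pi / 2 * (wc n ^ 2 / (2 * (n : ℝ) + 1)) := by
    intro n
    rw [intervalIntegral.integral_const_mul, integral_sin_half]; ring
  have h := integral_series (b := Real.pi / 2) (by positivity)
    (fun n x => wc n / (2 * n + 1) * Real.sin x ^ (2 * n)) (fun x => (Real.sinc x)⁻¹)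
    (fun n => by fun_prop) (by
      have : ∀ (n : ℕ) (x : ℝ), ‖wc n / (2 * n + 1) * Real.sin x ^ (2 * n)‖ = wc n / (2 * n + 1) * Real.sin x ^ (2 * n) := by
        intro n x
        have := wc_pos n
        rw [pow_mul]
        exact Real.norm_of_nonneg (by positivity)
      simp_rw [this, hv]
      exact summable_S1.mul_left _)
    (by
      intro x hx
      have hs : 0 < Real.sin x := Real.sin_pos_of_pos_of_lt_pi hx.1 (by linarith [hx.2, Real.pi_pos])
      have hs1 : Real.sin x < 1 := by
        rw [← Real.sin_pi_div_two]
        exact Real.sin_lt_sin_of_lt_of_le_pi_div_two (by linarith [hx.1, Real.pi_pos]) le_rfl hx.2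
      have := (hasSum_arcsin _ hs.le hs1).div_const (Real.sin x)
      rw [Real.arcsin_sin (by linarith [hx.1, Real.pi_pos]) hx.2.le] at this
      rw [Real.sinc_of_ne_zero hx.1.ne', inv_div]
      refine this.congr_fun ?_ |> id
      intro n
      rw [pow_succ]
      field_simp)
  simpa only [hv] using h

lemma catalan_int : HasSum (fun n : ℕ => (-1 : ℝ) ^ n / (2 * (n : ℝ) + 1) ^ 2)
    (∫ x in (0:ℝ)..1, Real.arctan x / x) := by
  have hv : ∀ n : ℕ, ∫ x in (0:ℝ)..1, (-1 : ℝ) ^ n / (2 * n + 1) * x ^ (2 * n) =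
      (-1 : ℝ) ^ n / (2 * (n : ℝ) + 1) ^ 2 := by
    intro n
    rw [intervalIntegral.integral_const_mul, integral_pow]; simp; field_simp
  have h := integral_series (b := 1) (by positivity)
    (fun n x => (-1 : ℝ) ^ n / (2 * n + 1) * x ^ (2 * n)) (fun x => Real.arctan x / x)
    (fun n => by fun_prop) (by
      have : ∀ (n : ℕ) (x : ℝ), ‖(-1 : ℝ) ^ n / (2 * n + 1) * x ^ (2 * n)‖ = 1 / (2 * n + 1) * x ^ (2 * n) := by
        intro n x
        rw [norm_mul, norm_div, norm_pow, norm_neg, norm_one, one_pow, Real.norm_of_nonneg (by positivity), pow_mul, Real.norm_of_nonneg (by positivity)]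
      simp_rw [this]
      refine summable_odd_sq.congr fun n => ?_
      rw [intervalIntegral.integral_const_mul, integral_pow]; simp; field_simp)
    (by
      intro x hx
      have := (Real.hasSum_arctan (x := x) (by rw [Real.norm_of_nonneg hx.1.le]; exact hx.2)).div_const x
      refine this.congr_fun ?_ |> id
      intro n
      have := hx.1.ne'
      push_cast
      rw [pow_succ]
      field_simp)
  simpa only [hv] using h

lemma int_subst : ∫ x in (0:ℝ)..(Real.pi / 2), (Real.sinc x)⁻¹ = 2 * ∫ x in (0:ℝ)..1, Real.arctan x / x := by
  have h := intervalIntegral.integral_comp_mul_deriv' (a := 0) (b := 1) (f := fun t => 2 * Real.arctan t)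
    (f' := fun t => 2 * (1 / (1 + t ^ 2))) (g := fun x => (Real.sinc x)⁻¹)
    (fun x _ => (Real.hasDerivAt_arctan x).const_mul 2)
    (by
      apply Continuous.continuousOn
      have : ∀ t : ℝ, 1 + t ^ 2 ≠ 0 := fun t => by positivity
      fun_prop (disch := assumption))
    (by
      apply ContinuousOn.inv₀ Real.continuous_sinc.continuousOn
      rintro _ ⟨t, ht, rfl⟩
      rw [Set.uIcc_of_le zero_le_one] at ht
      rcases eq_or_lt_of_le ht.1 with h0 | h0
      · simp [← h0]
      · have := Real.arctan_pos.2 h0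
        have := Real.arctan_lt_pi_div_two t
        rw [Real.sinc_of_ne_zero (by positivity)]
        have := Real.sin_pos_of_pos_of_lt_pi (x := 2 * Real.arctan t) (by positivity) (by linarith)
        positivity)
  have e : 2 * Real.arctan 1 = Real.pi / 2 := by rw [Real.arctan_one]; ring
  simp only [Real.arctan_zero, mul_zero, e] at h
  rw [← h, ← intervalIntegral.integral_const_mul]
  simp only [intervalIntegral.integral_of_le zero_le_one]
  apply setIntegral_congr_fun measurableSet_Ioc
  intro t ht
  have h0 := ht.1
  have := Real.arctan_pos.2 h0
  simp only [Function.comp]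
  rw [Real.sinc_of_ne_zero (by positivity), Real.sin_two_mul]
  have hs : Real.sin (Real.arctan t) * Real.cos (Real.arctan t) = t / (1 + t ^ 2) := by
    rw [Real.sin_arctan, Real.cos_arctan, div_mul_div_comm, Real.mul_self_sqrt (by positivity), mul_one]
  rw [mul_assoc, hs]
  field_simp

lemma tele : HasSum (fun n : ℕ => 4 * (wc n ^ 2 / (2 * (n : ℝ) + 3)) - wc n ^ 2 / (2 * (n : ℝ) + 1)) (2 / Real.pi) := by
  have hsum : Summable (fun n : ℕ => 4 * (wc n ^ 2 / (2 * (n : ℝ) + 3)) - wc n ^ 2 / (2 * (n : ℝ) + 1)) := by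
    refine Summable.sub (Summable.mul_left _ ?_) summable_S1
    exact Summable.of_nonneg_of_le (fun n => by positivity) (fun n => by gcongr; norm_num) summable_S1
  rw [hsum.hasSum_iff_tendsto_nat]
  have hp : ∀ N : ℕ, ∑ n ∈ Finset.range N, (4 * (wc n ^ 2 / (2 * (n : ℝ) + 3)) - wc n ^ 2 / (2 * (n : ℝ) + 1)) =
      (1 - 1 / (2 * (N : ℝ) + 1)) ^ 2 / Real.Wallis.W N := by
    intro N
    trans wc N ^ 2 * (4 * N ^ 2 / (2 * N + 1))
    · induction N with
      | zero => simp
      | succ n ih =>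
        rw [Finset.sum_range_succ, ih, wc_succ]
        push_cast
        field_simp
        ring
    · have := Real.Wallis.W_pos N
      rw [wc_sq]
      field_simp
      ring
  simp_rw [hp]
  have hl : Tendsto (fun N : ℕ => 1 / (2 * (N : ℝ) + 1)) atTop (nhds 0) := by
    refine tendsto_const_nhds.div_atTop ?_
    refine Tendsto.atTop_add ?_ tendsto_const_nhds
    exact tendsto_natCast_atTop_atTop.const_mul_atTop two_pos
  have := ((hl.const_sub 1).pow 2).div Real.Wallis.tendsto_W_nhds_pi_div_two (by positivity)
  have e : 2 / Real.pi = (1 - 0) ^ 2 / (Real.pi / 2) := by simp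
  rw [e]
  exact this

/-- Σ_{n≥0} (Γ(n+1/2)/(n! Γ(1/2)))² /(2n+3) = (1+2α)/(2π), α the Catalan constant. -/
theorem sum_eq_catalan :
    ∑' n : ℕ,
        (Real.Gamma ((n : ℝ) + 1 / 2) / ((n.factorial : ℝ) * Real.Gamma (1 / 2))) ^ 2 *
          (1 / (2 * (n : ℝ) + 3))
      = (1 + 2 * catalanConst) / (2 * Real.pi) := by
  have h1 : HasSum (fun n : ℕ => Real.pi / 2 * (wc n ^ 2 / (2 * (n : ℝ) + 1))) (2 * catalanConst) := by
    have := S1_eq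
    rwa [int_subst, ← catalan_int.tsum_eq] at this
  have h := ((h1.mul_left (2 / Real.pi)).add tele).mul_left (1 / 4)
  have hpi := Real.pi_ne_zero
  rw [show (1 + 2 * catalanConst) / (2 * Real.pi) = 1 / 4 * (2 / Real.pi * (2 * catalanConst) + 2 / Real.pi) by
    field_simp; ring, ← h.tsum_eq]
  congr 1
  ext n
  rw [wc_gamma]
  field_simp
  ring
end
end
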